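/- (Jump relation for the free-plate shear trace of the biharmonic single layer.) Let ν ∈ ℝ, let σ : ℝ → ℝ be infinitely differentiable with σ(s+L) = σ(s) for all s, and fix t ∈ ℝ. Define the kernel K(x, y) = G^B_{n_x n_x n_x}(x,y) + (2−ν) G^B_{n_x τ_x τ_x}(x,y) + (1−ν)κ(t)·[ G^B_{τ_x τ_x}(x,y) − G^B_{n_x n_x}(x,y) ], where with r = x − y, n_x = n(t), τ_x = τ(t): G^B_{n_x n_x n_x}(x,y) = (3/(4π))(r·n_x)/‖r‖² − (1/(2π))(r·n_x)³/‖r‖⁴, G^B_{n_x τ_x τ_x}(x,y) = −(1/(2π))(r·n_x)(r·τ_x)²/‖r‖⁴ + (1/(4π))(r·n_x)/‖r‖², and G^B_{τ_x τ_x}(x,y) − G^B_{n_x n_x}(x,y) = 1/(4π) − (1/(2π))(r·n_x)²/‖r‖². Then there is h₀ > 0 such that for 0 < |h| < h₀ the point γ(t) + h·n(t) does not lie on the curve, the function s ↦ K(γ(t), γ(s))·σ(s) is bounded on [0, L] with Lebesgue integral I := ∫₀^L K(γ(t), γ(s))σ(s) ds, and lim_{h→0⁺} ∫₀^L K(γ(t)+h·n(t),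 γ(s))σ(s) ds = (1/2)σ(t) + I, while lim_{h→0⁻} ∫₀^L K(γ(t)+h·n(t), γ(s))σ(s) ds = −(1/2)σ(t) + I. -/

import Mathlib

open Real Filter Topology MeasureTheory

noncomputable section

/-- Euclidean dot product on `ℝ × ℝ`. -/
def dot2 (v w : ℝ × ℝ) : ℝ := v.1 * w.1 + v.2 * w.2

/-- Unit tangent vector `τ(s) = γ′(s)`. -/
def tang (γ : ℝ → ℝ × ℝ) (s : ℝ) : ℝ × ℝ := deriv γ s

/-- Unit normal vector `n(s) = (τ₂(s), −τ₁(s))`. -/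
def nor (γ : ℝ → ℝ × ℝ) (s : ℝ) : ℝ × ℝ := ((deriv γ s).2, -(deriv γ s).1)

/-- Signed curvature `κ(s) = −γ″(s)·n(s)`. -/
def curv (γ : ℝ → ℝ × ℝ) (s : ℝ) : ℝ := -(dot2 (deriv (deriv γ) s) (nor γ s))

/-- The free-plate kernel
`K^B_{22,free}(x,y) = G^B_{n_x n_x n_x} + (2−ν) G^B_{n_x τ_x τ_x}
  + (1−ν)κ(t)(G^B_{τ_x τ_x} − G^B_{n_x n_x})`, given by explicit formulas,
with `r = x − y`, `n_x = n(t)`, `τ_x = τ(t)`. -/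
def K22free (γ : ℝ → ℝ × ℝ) (ν : ℝ) (t : ℝ) (x y : ℝ × ℝ) : ℝ :=
  (3 / (4 * π) * dot2 (x - y) (nor γ t) / dot2 (x - y) (x - y)
      - 1 / (2 * π) * (dot2 (x - y) (nor γ t)) ^ 3 / (dot2 (x - y) (x - y)) ^ 2)
    + (2 - ν) *
      (-(1 / (2 * π)) * dot2 (x - y) (nor γ t) * (dot2 (x - y) (tang γ t)) ^ 2
          / (dot2 (x - y) (x - y)) ^ 2
        + 1 / (4 * π) * dot2 (x - y) (nor γ t) / dot2 (x - y) (x - y))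
    + (1 - ν) * curv γ t *
      (1 / (4 * π) - 1 / (2 * π) * (dot2 (x - y) (nor γ t)) ^ 2 / dot2 (x - y) (x - y))

lemma aux_cross (a0 b0 a1 b1 r0 r1 : ℝ) (h0 : 0 < r0) (h1 : 0 < r1)
    (e0 : r0 ^ 2 = a0 ^ 2 + b0 ^ 2) (e1 : r1 ^ 2 = a1 ^ 2 + b1 ^ 2) :
    |a0 * a1 - b0 * b1| ≤ r0 * r1 ∧ |a0 * b1 + a1 * b0| ≤ r0 * r1 := by
  have h : (r0 * r1) ^ 2 = (a0 * a1 - b0 * b1) ^ 2 + (a0 * b1 + a1 * b0) ^ 2 := by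
    rw [mul_pow, e0, e1]; ring
  have hp : 0 ≤ r0 * r1 := by positivity
  constructor
  · apply abs_le_of_sq_le_sq _ hp; nlinarith [sq_nonneg (a0 * b1 + a1 * b0)]
  · apply abs_le_of_sq_le_sq _ hp; nlinarith [sq_nonneg (a0 * a1 - b0 * b1)]

lemma aux_comp (a b r : ℝ) (h : 0 < r) (e : r ^ 2 = a ^ 2 + b ^ 2) : |a| ≤ r ∧ |b| ≤ r := by
  constructor
  · apply abs_le_of_sq_le_sq _ h.le; nlinarith [sq_nonneg b]
  · apply abs_le_of_sq_le_sq _ h.le; nlinarith [sq_nonneg a]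

lemma aux_A (a0 b0 a1 b1 r0 r1 d : ℝ) (h0 : 0 < r0) (h1 : 0 < r1)
    (e0 : r0 ^ 2 = a0 ^ 2 + b0 ^ 2) (e1 : r1 ^ 2 = a1 ^ 2 + b1 ^ 2)
    (hd : |a1 - a0| + |b1 - b0| ≤ d) :
    |a1 / r1 ^ 2 - a0 / r0 ^ 2| ≤ d / (r0 * r1) := by
  obtain ⟨c1, c2⟩ := aux_cross a0 b0 a1 b1 r0 r1 h0 h1 e0 e1
  have hp : 0 < r0 * r1 := by positivity
  have key : a1 / r1 ^ 2 - a0 / r0 ^ 2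
      = ((a0 - a1) * (a0 * a1 - b0 * b1) + (b0 - b1) * (a0 * b1 + a1 * b0)) / (r0 * r1) ^ 2 := by
    rw [div_sub_div _ _ (by positivity) (by positivity), mul_pow, mul_comm (r0 ^ 2)]
    congr 1
    rw [e0, e1]; ring
  rw [key, abs_div, abs_of_pos (by positivity : 0 < (r0 * r1) ^ 2), div_le_div_iff₀ (by positivity) hp]
  have : |(a0 - a1) * (a0 * a1 - b0 * b1) + (b0 - b1) * (a0 * b1 + a1 * b0)| ≤ d * (r0 * r1) := by
    calc _ ≤ |a0 - a1| * |a0 * a1 - b0 * b1| + |b0 - b1| * |a0 * b1 + a1 * b0| := by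
          rw [← abs_mul, ← abs_mul]; exact abs_add_le _ _
      _ ≤ |a0 - a1| * (r0 * r1) + |b0 - b1| * (r0 * r1) := by gcongr
      _ = (|a1 - a0| + |b1 - b0|) * (r0 * r1) := by
          rw [abs_sub_comm a0, abs_sub_comm b0]; ring
      _ ≤ _ := by gcongr
  calc _ ≤ (d * (r0 * r1)) * (r0 * r1) := by gcongr
    _ = _ := by ring

lemma aux_B (a0 b0 a1 b1 r0 r1 d : ℝ) (h0 : 0 < r0) (h1 : 0 < r1)
    (e0 : r0 ^ 2 = a0 ^ 2 + b0 ^ 2) (e1 : r1 ^ 2 = a1 ^ 2 + b1 ^ 2)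
    (hd : |a1 - a0| + |b1 - b0| ≤ d) :
    |(a1 ^ 2 - b1 ^ 2) / r1 ^ 2 - (a0 ^ 2 - b0 ^ 2) / r0 ^ 2| ≤ 2 * d / r1 := by
  obtain ⟨c1, c2⟩ := aux_cross a0 b0 a1 b1 r0 r1 h0 h1 e0 e1
  obtain ⟨f1, f2⟩ := aux_comp a0 b0 r0 h0 e0
  have hp : 0 < r0 * r1 := by positivity
  have key : (a1 ^ 2 - b1 ^ 2) / r1 ^ 2 - (a0 ^ 2 - b0 ^ 2) / r0 ^ 2
      = (2 * (b0 * (a1 - a0) - a0 * (b1 - b0)) * (a0 * b1 + a1 * b0)) / (r0 * r1) ^ 2 := by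
    rw [div_sub_div _ _ (by positivity) (by positivity), mul_pow, mul_comm (r0 ^ 2)]
    congr 1
    rw [e0, e1]; ring
  rw [key, abs_div, abs_of_pos (by positivity : 0 < (r0 * r1) ^ 2), div_le_div_iff₀ (by positivity) h1]
  have h2 : |b0 * (a1 - a0) - a0 * (b1 - b0)| ≤ r0 * d := by
    calc _ ≤ |b0| * |a1 - a0| + |a0| * |b1 - b0| := by
          rw [← abs_mul, ← abs_mul]; exact abs_sub _ _
      _ ≤ r0 * |a1 - a0| + r0 * |b1 - b0| := by gcongr
      _ = r0 * (|a1 - a0| + |b1 - b0|) := by ring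
      _ ≤ _ := by gcongr
  rw [abs_mul, abs_mul, abs_two]
  calc _ ≤ 2 * (r0 * d) * (r0 * r1) * r1 := by
        gcongr
        have := abs_nonneg (b0 * (a1 - a0) - a0 * (b1 - b0)); linarith
    _ = _ := by ring

/-- simplified principal part of the kernel. -/
def FF (ν a b : ℝ) : ℝ :=
  1 / (2 * π) * (a / (a ^ 2 + b ^ 2))
    + (1 - ν) / (4 * π) * (a / (a ^ 2 + b ^ 2) * ((a ^ 2 - b ^ 2) / (a ^ 2 + b ^ 2)))

/-- simplified kernel. -/
def KK (ν k a b : ℝ) : ℝ :=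
  FF ν a b + (1 - ν) * k * (1 / (4 * π) - 1 / (2 * π) * (a ^ 2 / (a ^ 2 + b ^ 2)))

lemma pi_b1 : |1 / (2 * π)| ≤ 1 := by
  have := Real.pi_gt_three
  rw [abs_of_pos (by positivity), div_le_one (by positivity)]; linarith

lemma pi_b2 (x : ℝ) : |x / (4 * π)| ≤ |x| := by
  have := Real.pi_gt_three
  rw [abs_div, abs_of_pos (by positivity : 0 < 4 * π)]
  apply div_le_self (abs_nonneg _); linarith

lemma absB (a b : ℝ) : |(a ^ 2 - b ^ 2) / (a ^ 2 + b ^ 2)| ≤ 1 := by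
  rw [abs_div, abs_of_nonneg (by positivity : 0 ≤ a ^ 2 + b ^ 2)]
  apply div_le_one_of_le₀ _ (by positivity)
  rw [abs_le]; constructor <;> nlinarith [sq_nonneg a, sq_nonneg b]

lemma absA (a b r : ℝ) (h : 0 < r) (e : r ^ 2 = a ^ 2 + b ^ 2) : |a / (a ^ 2 + b ^ 2)| ≤ 1 / r := by
  rw [← e, abs_div, abs_of_pos (by positivity : 0 < r ^ 2), div_le_div_iff₀ (by positivity) h]
  have := (aux_comp a b r h e).1
  nlinarith

lemma FF_le (ν a b r : ℝ) (h : 0 < r) (e : r ^ 2 = a ^ 2 + b ^ 2) :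
    |FF ν a b| ≤ (1 + |1 - ν|) / r := by
  have h1 := absA a b r h e
  have h2 := absB a b
  have h3 := pi_b1
  have h4 := pi_b2 (1 - ν)
  unfold FF
  calc _ ≤ |1 / (2 * π)| * |a / (a ^ 2 + b ^ 2)| + |(1 - ν) / (4 * π)| *
        (|a / (a ^ 2 + b ^ 2)| * |(a ^ 2 - b ^ 2) / (a ^ 2 + b ^ 2)|) := by
        rw [← abs_mul, ← abs_mul, ← abs_mul]; exact abs_add_le _ _
    _ ≤ 1 * (1 / r) + |1 - ν| * (1 / r * 1) := by gcongr
    _ = _ := by ring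

lemma FF_lip (ν a0 b0 a1 b1 r0 r1 d : ℝ) (h0 : 0 < r0) (h1 : 0 < r1)
    (e0 : r0 ^ 2 = a0 ^ 2 + b0 ^ 2) (e1 : r1 ^ 2 = a1 ^ 2 + b1 ^ 2)
    (hd : |a1 - a0| + |b1 - b0| ≤ d) :
    |FF ν a1 b1 - FF ν a0 b0| ≤ (1 + |1 - ν| * 3) * (d / (r0 * r1)) := by
  have hA := aux_A a0 b0 a1 b1 r0 r1 d h0 h1 e0 e1 hd
  have hB := aux_B a0 b0 a1 b1 r0 r1 d h0 h1 e0 e1 hd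
  have hA0 := absA a0 b0 r0 h0 e0
  have hB1 := absB a1 b1
  have h3 := pi_b1
  have h4 := pi_b2 (1 - ν)
  rw [e0, e1] at hA hB
  have hd0 : 0 ≤ d := le_trans (by positivity) hd
  unfold FF
  set A0 := a0 / (a0 ^ 2 + b0 ^ 2)
  set A1 := a1 / (a1 ^ 2 + b1 ^ 2)
  set B0 := (a0 ^ 2 - b0 ^ 2) / (a0 ^ 2 + b0 ^ 2)
  set B1 := (a1 ^ 2 - b1 ^ 2) / (a1 ^ 2 + b1 ^ 2)
  have h5 : |A1 * B1 - A0 * B0| ≤ 3 * (d / (r0 * r1)) := by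
    calc _ = |(A1 - A0) * B1 + A0 * (B1 - B0)| := by ring_nf
      _ ≤ |A1 - A0| * |B1| + |A0| * |B1 - B0| := by
        rw [← abs_mul, ← abs_mul]; exact abs_add_le _ _
      _ ≤ (d / (r0 * r1)) * 1 + (1 / r0) * (2 * d / r1) := by gcongr
      _ = _ := by field_simp; ring
  calc _ = |1 / (2 * π) * (A1 - A0) + (1 - ν) / (4 * π) * (A1 * B1 - A0 * B0)| := by ring_nf
    _ ≤ |1 / (2 * π)| * |A1 - A0| + |(1 - ν) / (4 * π)| * |A1 * B1 - A0 * B0| := by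
        rw [← abs_mul, ← abs_mul]; exact abs_add_le _ _
    _ ≤ 1 * (d / (r0 * r1)) + |1 - ν| * (3 * (d / (r0 * r1))) := by gcongr
    _ = _ := by ring

lemma third_le (ν k a b : ℝ) :
    |(1 - ν) * k * (1 / (4 * π) - 1 / (2 * π) * (a ^ 2 / (a ^ 2 + b ^ 2)))| ≤ |(1 - ν) * k| * 2 := by
  rw [abs_mul]
  gcongr
  have h1 : |a ^ 2 / (a ^ 2 + b ^ 2)| ≤ 1 := by
    rw [abs_of_nonneg (by positivity)]
    exact div_le_one_of_le₀ (by nlinarith [sq_nonneg b]) (by positivity)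
  have h2 := pi_b2 1
  have h3 := pi_b1
  calc _ ≤ |1 / (4 * π)| + |1 / (2 * π)| * |a ^ 2 / (a ^ 2 + b ^ 2)| := by
        rw [← abs_mul]; exact abs_sub _ _
    _ ≤ |1| + 1 * 1 := by gcongr
    _ = 2 := by norm_num

lemma lower_bd (ℓ C : ℝ) (hℓ : 0 < ℓ) (P Q : ℝ → ℝ) (hP : Continuous P) (hQ : Continuous Q)
    (hPC : ∀ u, |u| ≤ ℓ → |P u| ≤ C * u ^ 2) (hQC : ∀ u, |u| ≤ ℓ → |Q u - u| ≤ C * u ^ 2)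
    (hne : ∀ u, |u| ≤ ℓ → u ≠ 0 → 0 < P u ^ 2 + Q u ^ 2) :
    ∃ h₀ > (0 : ℝ), ∃ c > (0 : ℝ), ∀ h u, |h| < h₀ → |u| ≤ ℓ →
      c * (h ^ 2 + u ^ 2) ≤ (h + P u) ^ 2 + Q u ^ 2 := by
  have hC : 0 ≤ C := by
    have := (abs_nonneg _).trans (hPC ℓ (by rw [abs_of_pos hℓ]))
    by_contra hc
    nlinarith [sq_pos_of_pos hℓ]
  set δ := 1 / (4 * (C + 1)) with hδ
  have hδ0 : 0 < δ := by positivity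
  have hCδ : C * δ ≤ 1 / 4 := by
    rw [hδ, mul_one_div, div_le_div_iff₀ (by positivity) (by norm_num)]; linarith
  have hK : IsCompact ({u : ℝ | δ ≤ |u|} ∩ Set.Icc (-ℓ) ℓ) :=
    isCompact_Icc.inter_left (isClosed_le continuous_const continuous_abs)
  obtain ⟨m, hm0, hm⟩ := hK.exists_forall_le' (f := fun u => P u ^ 2 + Q u ^ 2) (a := 0)
    (by fun_prop) (fun u hu => hne u (abs_le.2 hu.2) (by
      rintro rfl; have := hu.1; simp at this; linarith))
  refine ⟨√(m / 4), by positivity, min (1 / 2) ((m / 4) / (m / 4 + ℓ ^ 2)), by positivity, ?_⟩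
  intro h u hh hu
  have hh2 : h ^ 2 ≤ m / 4 := by
    rw [← sq_abs, ← Real.sq_sqrt (by positivity : 0 ≤ m / 4)]; gcongr
  rcases lt_or_ge (|u|) δ with hc | hc
  · have hu2 : C * u ^ 2 ≤ |u| / 4 := by
      rw [← sq_abs u]; nlinarith [abs_nonneg u]
    have h1 := (hPC u hu).trans hu2
    have h2 := (hQC u hu).trans hu2
    have h3 : (P u) ^ 2 ≤ u ^ 2 / 16 := by
      rw [← sq_abs, ← sq_abs u]; nlinarith [abs_nonneg (P u), abs_nonneg u]
    have h4 : 3 / 4 * |u| ≤ |Q u| := by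
      have := abs_sub_abs_le_abs_sub u (Q u)
      rw [abs_sub_comm] at this; linarith
    have h5 : 9 / 16 * u ^ 2 ≤ Q u ^ 2 := by
      rw [← sq_abs, ← sq_abs (Q u)]; nlinarith [abs_nonneg (Q u), abs_nonneg u]
    calc _ ≤ 1 / 2 * (h ^ 2 + u ^ 2) := by gcongr; exact min_le_left _ _
      _ ≤ _ := by nlinarith [sq_nonneg (h + 2 * P u)]
  · have h1 := hm u ⟨hc, abs_le.1 hu⟩
    have h2 : u ^ 2 ≤ ℓ ^ 2 := by rw [← sq_abs]; gcongr
    calc _ ≤ (m / 4) / (m / 4 + ℓ ^ 2) * (m / 4 + ℓ ^ 2) := by gcongr; exact min_le_right _ _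
      _ = m / 4 := by field_simp
      _ ≤ _ := by nlinarith [sq_nonneg (2 * h + P u), sq_nonneg (Q u)]

lemma diff_bd (ℓ C : ℝ) (P Q S : ℝ → ℝ) (hS : Continuous S)
    (hPC : ∀ u, |u| ≤ ℓ → |P u| ≤ C * u ^ 2) (hQC : ∀ u, |u| ≤ ℓ → |Q u - u| ≤ C * u ^ 2)
    (hSC : ∀ u, |u| ≤ ℓ → |S u - S 0| ≤ C * |u|) (ν k h₀ c : ℝ) (hC : 0 ≤ C)
    (hc : 0 < c) (hlow : ∀ h u, |h| < h₀ → |u| ≤ ℓ →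
      c * (h ^ 2 + u ^ 2) ≤ (h + P u) ^ 2 + Q u ^ 2) :
    ∃ M, ∀ h u, |h| < h₀ → |u| ≤ ℓ → u ≠ 0 →
      |KK ν k (h + P u) (Q u) * S u - FF ν h u * S 0| ≤ M := by
  obtain ⟨D, hD⟩ := (isCompact_Icc (a := -ℓ) (b := ℓ)).exists_bound_of_continuousOn hS.continuousOn
  refine ⟨(1 + |1 - ν| * 3) * (2 * C / √c) * D + (1 + |1 - ν|) * C + |(1 - ν) * k| * 2 * D, ?_⟩
  intro h u hh hu hu0
  have hDu : |S u| ≤ D := hD u (abs_le.1 hu)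
  have hD0 : 0 ≤ D := (abs_nonneg _).trans hDu
  have hR0 : 0 < h ^ 2 + u ^ 2 := by positivity
  have hl := hlow h u hh hu
  have hR1 : 0 < (h + P u) ^ 2 + Q u ^ 2 := lt_of_lt_of_le (by positivity) hl
  set r0 := √(h ^ 2 + u ^ 2) with hr0
  set r1 := √((h + P u) ^ 2 + Q u ^ 2) with hr1
  have p0 : 0 < r0 := by positivity
  have p1 : 0 < r1 := by positivity
  have e0 : r0 ^ 2 = h ^ 2 + u ^ 2 := Real.sq_sqrt hR0.le
  have e1 : r1 ^ 2 = (h + P u) ^ 2 + Q u ^ 2 := Real.sq_sqrt hR1.le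
  have hd : |h + P u - h| + |Q u - u| ≤ 2 * C * u ^ 2 := by
    have := hPC u hu; have := hQC u hu
    rw [add_sub_cancel_left]; linarith
  have hlip := FF_lip ν h u (h + P u) (Q u) r0 r1 _ p0 p1 e0 e1 hd
  have hF := FF_le ν h u r0 p0 e0
  have hur : |u| ≤ r0 := (aux_comp _ _ _ p0 e0).2
  have hr : √c * r0 ≤ r1 := by
    rw [hr0, hr1, ← Real.sqrt_mul hc.le]; exact Real.sqrt_le_sqrt hl
  have hq : 2 * C * u ^ 2 / (r0 * r1) ≤ 2 * C / √c := by
    have hsc : 0 < √c := by positivity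
    rw [div_le_div_iff₀ (by positivity) hsc]
    have : u ^ 2 * √c ≤ r0 * r1 := by
      calc u ^ 2 * √c ≤ r0 ^ 2 * √c := by rw [← sq_abs u]; gcongr
        _ = r0 * (√c * r0) := by ring
        _ ≤ _ := by gcongr
    calc _ = 2 * C * (u ^ 2 * √c) := by ring
      _ ≤ _ := by gcongr
  have ht := third_le ν k (h + P u) (Q u)
  set T := (1 - ν) * k * (1 / (4 * π) - 1 / (2 * π) * ((h + P u) ^ 2 / ((h + P u) ^ 2 + Q u ^ 2))) with hT
  have hKK : KK ν k (h + P u) (Q u) = FF ν (h + P u) (Q u) + T := rfl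
  rw [hKK]
  calc _ = |(FF ν (h + P u) (Q u) - FF ν h u) * S u + FF ν h u * (S u - S 0) + T * S u| := by ring_nf
    _ ≤ |FF ν (h + P u) (Q u) - FF ν h u| * |S u| + |FF ν h u| * |S u - S 0| + |T| * |S u| := by
      rw [← abs_mul, ← abs_mul, ← abs_mul]; exact abs_add_three _ _ _
    _ ≤ ((1 + |1 - ν| * 3) * (2 * C / √c)) * D + ((1 + |1 - ν|) / r0) * (C * r0)
        + |(1 - ν) * k| * 2 * D := by
      gcongr
      · exact hlip.trans (by gcongr)
      · exact (hSC u hu).trans (by gcongr)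
    _ = _ := by field_simp

lemma model_int (ν h ℓ : ℝ) (hh : h ≠ 0) :
    Continuous (FF ν h) ∧ ∫ u in (-ℓ)..ℓ, FF ν h u =
      1 / π * arctan (ℓ / h) + (1 - ν) / (2 * π) * (h * ℓ / (h ^ 2 + ℓ ^ 2)) := by
  have hpos : ∀ u : ℝ, h ^ 2 + u ^ 2 ≠ 0 := fun u => by positivity
  have hcont : Continuous (FF ν h) := by
    unfold FF
    fun_prop (disch := exact hpos _)
  refine ⟨hcont, ?_⟩
  have hder : ∀ u ∈ Set.uIcc (-ℓ) ℓ, HasDerivAt (fun u => 1 / (2 * π) * arctan (u / h)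
      + (1 - ν) / (4 * π) * (h * u / (h ^ 2 + u ^ 2))) (FF ν h u) u := by
    intro u _
    have h1 := (((hasDerivAt_id u).div_const h).arctan).const_mul (1 / (2 * π))
    have h2 := (((hasDerivAt_id u).const_mul h).div
      (((hasDerivAt_id u).pow 2).const_add (h ^ 2)) (hpos u)).const_mul ((1 - ν) / (4 * π))
    refine (h1.add h2).congr_deriv ?_
    have := hpos u
    have h3 : 1 + (u / h) ^ 2 ≠ 0 := by positivity
    have h4 : 1 / (1 + (u / h) ^ 2) * (1 / h) = h / (h ^ 2 + u ^ 2) := by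
      field_simp
    simp only [id, FF, Pi.pow_apply]
    rw [h4]
    congr 2
    field_simp
    norm_num
    ring
  rw [intervalIntegral.integral_eq_sub_of_hasDerivAt hder (hcont.intervalIntegrable _ _)]
  rw [neg_div, arctan_neg]
  field_simp
  ring

lemma core_tendsto (ℓ C : ℝ) (hℓ : 0 < ℓ) (P Q S : ℝ → ℝ) (hP : Continuous P) (hQ : Continuous Q)
    (hS : Continuous S) (ν k h₀ M : ℝ) (hh₀ : 0 < h₀)
    (hne : ∀ u, |u| ≤ ℓ → u ≠ 0 → 0 < P u ^ 2 + Q u ^ 2)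
    (hM : ∀ h u, |h| < h₀ → |u| ≤ ℓ → u ≠ 0 →
      |KK ν k (h + P u) (Q u) * S u - FF ν h u * S 0| ≤ M) :
    Tendsto (fun h => ∫ u in (-ℓ)..ℓ, KK ν k (h + P u) (Q u) * S u) (𝓝[>] 0)
      (𝓝 (1 / 2 * S 0 + ∫ u in (-ℓ)..ℓ, KK ν k (P u) (Q u) * S u)) ∧
    Tendsto (fun h => ∫ u in (-ℓ)..ℓ, KK ν k (h + P u) (Q u) * S u) (𝓝[<] 0)
      (𝓝 (-(1 / 2) * S 0 + ∫ u in (-ℓ)..ℓ, KK ν k (P u) (Q u) * S u)) := by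
  have hsub : ∀ u ∈ Set.uIoc (-ℓ) ℓ, |u| ≤ ℓ := by
    intro u hu
    rw [Set.uIoc_of_le (by linarith)] at hu
    exact abs_le.2 ⟨hu.1.le, hu.2⟩
  have hPm := hP.measurable
  have hQm := hQ.measurable
  have hSm := hS.measurable
  have hmeas : ∀ h, Measurable (fun u => KK ν k (h + P u) (Q u) * S u - FF ν h u * S 0) := by
    intro h
    unfold KK FF
    fun_prop
  have hae : ∀ᵐ u : ℝ, u ≠ 0 := by
    simp [ae_iff]
  have hnb : ∀ᶠ h in 𝓝[≠] (0 : ℝ), |h| < h₀ ∧ h ≠ 0 := by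
    have h1 : ∀ᶠ h in 𝓝 (0 : ℝ), |h| < h₀ := by
      have := Metric.ball_mem_nhds (0 : ℝ) hh₀
      filter_upwards [this] with h hh
      simpa using hh
    exact (h1.filter_mono nhdsWithin_le_nhds).and self_mem_nhdsWithin
  have hE : Tendsto (fun h => ∫ u in (-ℓ)..ℓ, (KK ν k (h + P u) (Q u) * S u - FF ν h u * S 0))
      (𝓝[≠] 0) (𝓝 (∫ u in (-ℓ)..ℓ, KK ν k (P u) (Q u) * S u)) := by
    apply intervalIntegral.tendsto_integral_filter_of_dominated_convergence (fun _ => M)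
    · exact Eventually.of_forall fun h => (hmeas h).aestronglyMeasurable
    · filter_upwards [hnb] with h hh
      filter_upwards [hae] with u hu hu'
      exact hM h u hh.1 (hsub u hu') hu
    · exact intervalIntegrable_const
    · filter_upwards [hae] with u hu hu'
      have hpos := hne u (hsub u hu') hu
      have hpos' : (0 + P u) ^ 2 + Q u ^ 2 ≠ 0 := by rw [zero_add]; exact hpos.ne'
      have hpos'' : (0 : ℝ) ^ 2 + u ^ 2 ≠ 0 := by positivity
      have hc : ContinuousAt (fun h => KK ν k (h + P u) (Q u) * S u - FF ν h u * S 0) 0 := by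
        unfold KK FF
        fun_prop (disch := assumption)
      have := hc.tendsto
      simp only [zero_add] at this
      have h0 : FF ν 0 u = 0 := by simp [FF]
      rw [h0, zero_mul, sub_zero] at this
      exact this.mono_left nhdsWithin_le_nhds
  have heq : ∀ᶠ h in 𝓝[≠] (0 : ℝ), (∫ u in (-ℓ)..ℓ, (KK ν k (h + P u) (Q u) * S u - FF ν h u * S 0))
      + (1 / π * arctan (ℓ / h) + (1 - ν) / (2 * π) * (h * ℓ / (h ^ 2 + ℓ ^ 2))) * S 0
      = ∫ u in (-ℓ)..ℓ, KK ν k (h + P u) (Q u) * S u := by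
    filter_upwards [hnb] with h hh
    obtain ⟨hc, hi⟩ := model_int ν h ℓ hh.2
    rw [← hi, ← intervalIntegral.integral_mul_const, ← intervalIntegral.integral_add]
    · simp
    · apply IntervalIntegrable.mono_fun' (g := fun _ => M) intervalIntegrable_const
      · exact (hmeas h).aestronglyMeasurable
      · refine (ae_restrict_iff' measurableSet_uIoc).2 ?_
        filter_upwards [hae] with u hu hu'
        exact hM h u hh.1 (hsub u hu') hu
    · exact (hc.mul continuous_const).intervalIntegrable _ _
  have hmod : Tendsto (fun h : ℝ => (1 - ν) / (2 * π) * (h * ℓ / (h ^ 2 + ℓ ^ 2))) (𝓝 0) (𝓝 0) := by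
    have hpos'' : (0 : ℝ) ^ 2 + ℓ ^ 2 ≠ 0 := by positivity
    have hc : ContinuousAt (fun h : ℝ => (1 - ν) / (2 * π) * (h * ℓ / (h ^ 2 + ℓ ^ 2))) 0 := by
      fun_prop (disch := assumption)
    simpa using hc.tendsto
  have hgt : 𝓝[>] (0 : ℝ) ≤ 𝓝[≠] 0 := nhdsWithin_mono _ fun x hx => ne_of_gt hx
  have hlt : 𝓝[<] (0 : ℝ) ≤ 𝓝[≠] 0 := nhdsWithin_mono _ fun x hx => ne_of_lt hx
  have a1 : Tendsto (fun h : ℝ => arctan (ℓ / h)) (𝓝[>] 0) (𝓝 (π / 2)) := by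
    have hq : Tendsto (fun h : ℝ => ℓ / h) (𝓝[>] 0) atTop := by
      simp only [div_eq_mul_inv]
      exact tendsto_inv_nhdsGT_zero.const_mul_atTop hℓ
    exact (tendsto_nhds_of_tendsto_nhdsWithin tendsto_arctan_atTop).comp hq
  have a2 : Tendsto (fun h : ℝ => arctan (ℓ / h)) (𝓝[<] 0) (𝓝 (-(π / 2))) := by
    have hq : Tendsto (fun h : ℝ => ℓ / h) (𝓝[<] 0) atBot := by
      simp only [div_eq_mul_inv]
      exact tendsto_inv_nhdsLT_zero.const_mul_atBot hℓ
    exact (tendsto_nhds_of_tendsto_nhdsWithin tendsto_arctan_atBot).comp hq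
  constructor
  · refine Tendsto.congr' (heq.filter_mono hgt) ?_
    have := (hE.mono_left hgt).add
      (((a1.const_mul (1 / π)).add (hmod.mono_left nhdsWithin_le_nhds)).mul_const (S 0))
    convert this using 2
    field_simp
    ring
  · refine Tendsto.congr' (heq.filter_mono hlt) ?_
    have := (hE.mono_left hlt).add
      (((a2.const_mul (1 / π)).add (hmod.mono_left nhdsWithin_le_nhds)).mul_const (S 0))
    convert this using 2
    field_simp
    ring

lemma lip_bd (f : ℝ → ℝ) (hf : ContDiff ℝ 1 f) (t ℓ : ℝ) (hℓ : 0 < ℓ) :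
    ∃ C, 0 ≤ C ∧ ∀ u, |u| ≤ ℓ → |f (t + u) - f t| ≤ C * |u| := by
  obtain ⟨D, hD⟩ := (isCompact_Icc (a := t - ℓ) (b := t + ℓ)).exists_bound_of_continuousOn
    (hf.continuous_deriv le_rfl).continuousOn
  refine ⟨D, (norm_nonneg _).trans (hD t ⟨by linarith, by linarith⟩), fun u hu => ?_⟩
  have hu' := abs_le.1 hu
  have := (convex_Icc (t - ℓ) (t + ℓ)).norm_image_sub_le_of_norm_deriv_le (f := f) (C := D)
    (x := t) (y := t + u)
    (fun x _ => (hf.differentiable one_ne_zero) x) hD ⟨by linarith, by linarith⟩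
    ⟨by linarith, by linarith⟩
  simpa using this

lemma taylor_bd (f : ℝ → ℝ) (hf : ContDiff ℝ 2 f) (t ℓ : ℝ) (hℓ : 0 < ℓ) :
    ∃ C, 0 ≤ C ∧ ∀ u, |u| ≤ ℓ → |f (t + u) - f t - u * deriv f t| ≤ C * u ^ 2 := by
  have h1 : ContDiff ℝ 1 (deriv f) := by
    have : ContDiff ℝ (1 + 1) f := by simpa [one_add_one_eq_two] using hf
    exact (contDiff_succ_iff_deriv.1 this).2.2
  obtain ⟨C, hC, hl⟩ := lip_bd (deriv f) h1 t ℓ hℓ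
  refine ⟨C, hC, fun u hu => ?_⟩
  have hd : ∀ x, HasDerivAt (fun v => f (t + v) - v * deriv f t) (deriv f (t + x) - deriv f t) x := by
    intro x
    have e1 : HasDerivAt f (deriv f (t + x)) (t + x) :=
      ((hf.differentiable two_ne_zero) (t + x)).hasDerivAt
    have e2 := e1.comp_const_add t x
    have e3 := (hasDerivAt_id x).mul_const (deriv f t)
    have e4 := e2.sub e3
    rw [one_mul] at e4
    exact e4
  have := (convex_Icc (-|u|) |u|).norm_image_sub_le_of_norm_deriv_le
    (f := fun v => f (t + v) - v * deriv f t) (C := C * |u|) (x := 0) (y := u)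
    (fun x _ => (hd x).differentiableAt)
    (fun x hx => by
      rw [(hd x).deriv]
      have hx' := abs_le.2 hx
      exact (hl x (hx'.trans hu)).trans (by gcongr))
    ⟨by simp, abs_nonneg u⟩ ⟨neg_abs_le u, le_abs_self u⟩
  simp only [add_zero, zero_mul, sub_zero, Real.norm_eq_abs] at this
  calc _ = |f (t + u) - u * deriv f t - f t| := by ring_nf
    _ ≤ _ := this
    _ = _ := by rw [mul_assoc, abs_mul_abs_self]; ring

lemma K_eq (γ : ℝ → ℝ × ℝ) (ν t : ℝ) (harc : dot2 (deriv γ t) (deriv γ t) = 1) (x y : ℝ × ℝ) :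
    K22free γ ν t x y = KK ν (curv γ t) (dot2 (x - y) (nor γ t)) (- dot2 (x - y) (tang γ t)) := by
  have hR : dot2 (x - y) (x - y) = dot2 (x - y) (nor γ t) ^ 2 + dot2 (x - y) (tang γ t) ^ 2 := by
    calc _ = dot2 (x - y) (x - y) * dot2 (deriv γ t) (deriv γ t) := by rw [harc, mul_one]
      _ = _ := by simp only [dot2, nor, tang]; ring
  unfold K22free KK FF
  rw [hR]
  set a := dot2 (x - y) (nor γ t)
  set b := dot2 (x - y) (tang γ t)
  rw [neg_sq]
  by_cases h : a ^ 2 + b ^ 2 = 0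
  · rw [h]; simp
  · field_simp
    ring

lemma inj_per (L : ℝ) (hL : 0 < L) (γ : ℝ → ℝ × ℝ) (hper : ∀ s, γ (s + L) = γ s)
    (hinj : Set.InjOn γ (Set.Ico 0 L)) (t u : ℝ) (hu : |u| ≤ L / 2) (hu0 : u ≠ 0) :
    γ (t + u) ≠ γ t := by
  intro h
  have hp : Function.Periodic γ L := hper
  have key : ∀ x, ∃ m : ℤ, x - m * L ∈ Set.Ico 0 L ∧ γ (x - m * L) = γ x := by
    intro x
    refine ⟨⌊x / L⌋, ⟨?_, ?_⟩, by simpa using hp.sub_zsmul_eq ⌊x / L⌋ (x := x)⟩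
    · have := Int.floor_le (x / L)
      rw [le_div_iff₀ hL] at this; linarith
    · have := Int.lt_floor_add_one (x / L)
      rw [div_lt_iff₀ hL] at this; linarith
  obtain ⟨m, hm, hm'⟩ := key t
  obtain ⟨n, hn, hn'⟩ := key (t + u)
  have := hinj hn hm (by rw [hm', hn', h])
  have hu1 : u = ((n - m : ℤ) : ℝ) * L := by push_cast; linarith
  rw [hu1, abs_mul, abs_of_pos hL] at hu
  have h2 : |((n - m : ℤ) : ℝ)| < 1 := by nlinarith
  rw [← Int.cast_abs] at h2
  have h3 : |n - m| < 1 := by exact_mod_cast h2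
  rw [Int.abs_lt_one_iff] at h3
  rw [h3] at hu1
  simp at hu1
  exact hu0 hu1

theorem stmt19 (L : ℝ) (hL : 0 < L) (γ : ℝ → ℝ × ℝ)
    (hγ : ContDiff ℝ (⊤ : ℕ∞) γ)
    (hper : ∀ s, γ (s + L) = γ s)
    (hinj : Set.InjOn γ (Set.Ico 0 L))
    (harc : ∀ s, dot2 (deriv γ s) (deriv γ s) = 1)
    (ν : ℝ)
    (σ : ℝ → ℝ) (hσ : ContDiff ℝ (⊤ : ℕ∞) σ) (hσper : ∀ s, σ (s + L) = σ s)
    (t : ℝ) :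
    ∃ h₀ > (0 : ℝ),
      (∀ h : ℝ, 0 < |h| → |h| < h₀ → ∀ s : ℝ, γ t + h • nor γ t ≠ γ s) ∧
      (∃ M : ℝ, ∀ s ∈ Set.Icc (0 : ℝ) L, |K22free γ ν t (γ t) (γ s) * σ s| ≤ M) ∧
      Tendsto
        (fun h : ℝ =>
          ∫ s in (0 : ℝ)..L, K22free γ ν t (γ t + h • nor γ t) (γ s) * σ s)
        (𝓝[>] (0 : ℝ))
        (𝓝 (1 / 2 * σ t + ∫ s in (0 : ℝ)..L, K22free γ ν t (γ t) (γ s) * σ s)) ∧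
      Tendsto
        (fun h : ℝ =>
          ∫ s in (0 : ℝ)..L, K22free γ ν t (γ t + h • nor γ t) (γ s) * σ s)
        (𝓝[<] (0 : ℝ))
        (𝓝 (-(1 / 2) * σ t + ∫ s in (0 : ℝ)..L, K22free γ ν t (γ t) (γ s) * σ s)) := by
  have hp : Function.Periodic (fun s => (γ s, σ s)) L := fun s => by simp [hper s, hσper s]
  set ℓ := L / 2 with hℓd
  have hℓ : 0 < ℓ := by positivity
  set P : ℝ → ℝ := fun u => dot2 (γ t - γ (t + u)) (nor γ t) with hPdef
  set Q : ℝ → ℝ := fun u => - dot2 (γ t - γ (t + u)) (tang γ t) with hQdef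
  set S : ℝ → ℝ := fun u => σ (t + u) with hSdef
  have hc1 : ContDiff ℝ (⊤ : ℕ∞) (fun s => (γ s).1) := hγ.fst
  have hc2 : ContDiff ℝ (⊤ : ℕ∞) (fun s => (γ s).2) := hγ.snd
  have hcont := hγ.continuous
  have hcP : Continuous P := by simp only [hPdef, dot2]; fun_prop
  have hcQ : Continuous Q := by simp only [hQdef, dot2]; fun_prop
  have hcS : Continuous S := by have := hσ.continuous; simp only [hSdef]; fun_prop
  have hdγ : DifferentiableAt ℝ γ t := (hγ.differentiable (by simp)) t
  have hd1 : deriv (fun s => (γ s).1) t = (deriv γ t).1 := 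
    ((ContinuousLinearMap.fst ℝ ℝ ℝ).hasFDerivAt.comp_hasDerivAt t hdγ.hasDerivAt).deriv
  have hd2 : deriv (fun s => (γ s).2) t = (deriv γ t).2 := 
    ((ContinuousLinearMap.snd ℝ ℝ ℝ).hasFDerivAt.comp_hasDerivAt t hdγ.hasDerivAt).deriv
  have hle2 : (2 : WithTop ℕ∞) ≤ ((⊤ : ℕ∞) : WithTop ℕ∞) :=
    WithTop.coe_le_coe.2 le_top
  have hle1 : (1 : WithTop ℕ∞) ≤ ((⊤ : ℕ∞) : WithTop ℕ∞) :=
    WithTop.coe_le_coe.2 le_top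
  obtain ⟨C1, hC1, hb1⟩ := taylor_bd _ (hc1.of_le hle2) t ℓ hℓ
  obtain ⟨C2, hC2, hb2⟩ := taylor_bd _ (hc2.of_le hle2) t ℓ hℓ
  obtain ⟨C3, hC3, hb3⟩ := lip_bd σ (hσ.of_le hle1) t ℓ hℓ
  rw [hd1] at hb1
  rw [hd2] at hb2
  have harct := harc t
  have hτ1 : |(deriv γ t).1| ≤ 1 := by
    apply abs_le_of_sq_le_sq _ zero_le_one
    simp only [dot2] at harct; nlinarith [mul_self_nonneg (deriv γ t).2]
  have hτ2 : |(deriv γ t).2| ≤ 1 := by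
    apply abs_le_of_sq_le_sq _ zero_le_one
    simp only [dot2] at harct; nlinarith [mul_self_nonneg (deriv γ t).1]
  set C := C1 + C2 + C3 with hC
  have hC0 : 0 ≤ C := by positivity
  have hPC : ∀ u, |u| ≤ ℓ → |P u| ≤ C * u ^ 2 := by
    intro u hu
    have e : P u = -(((γ (t + u)).1 - (γ t).1 - u * (deriv γ t).1) * (deriv γ t).2)
        + ((γ (t + u)).2 - (γ t).2 - u * (deriv γ t).2) * (deriv γ t).1 := by
      simp only [hPdef, dot2, nor, Prod.fst_sub, Prod.snd_sub]; ring
    rw [e]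
    calc _ ≤ |(γ (t + u)).1 - (γ t).1 - u * (deriv γ t).1| * |(deriv γ t).2|
        + |(γ (t + u)).2 - (γ t).2 - u * (deriv γ t).2| * |(deriv γ t).1| := by
          rw [← abs_mul, ← abs_mul]
          exact (abs_add_le _ _).trans (by rw [abs_neg])
      _ ≤ (C1 * u ^ 2) * 1 + (C2 * u ^ 2) * 1 := by
          gcongr
          · exact hb1 u hu
          · exact hb2 u hu
      _ ≤ _ := by rw [hC]; nlinarith [mul_nonneg hC3 (sq_nonneg u)]
  have hQC : ∀ u, |u| ≤ ℓ → |Q u - u| ≤ C * u ^ 2 := by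
    intro u hu
    have e : Q u - u = ((γ (t + u)).1 - (γ t).1 - u * (deriv γ t).1) * (deriv γ t).1
        + ((γ (t + u)).2 - (γ t).2 - u * (deriv γ t).2) * (deriv γ t).2 := by
      have : u = u * dot2 (deriv γ t) (deriv γ t) := by rw [harct, mul_one]
      calc Q u - u = Q u - u * dot2 (deriv γ t) (deriv γ t) := by rw [← this]
        _ = _ := by simp only [hQdef, dot2, tang, Prod.fst_sub, Prod.snd_sub]; ring
    rw [e]
    calc _ ≤ |(γ (t + u)).1 - (γ t).1 - u * (deriv γ t).1| * |(deriv γ t).1|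
        + |(γ (t + u)).2 - (γ t).2 - u * (deriv γ t).2| * |(deriv γ t).2| := by
          rw [← abs_mul, ← abs_mul]
          exact abs_add_le _ _
      _ ≤ (C1 * u ^ 2) * 1 + (C2 * u ^ 2) * 1 := by
          gcongr
          · exact hb1 u hu
          · exact hb2 u hu
      _ ≤ _ := by rw [hC]; nlinarith [mul_nonneg hC3 (sq_nonneg u)]
  have hSC : ∀ u, |u| ≤ ℓ → |S u - S 0| ≤ C * |u| := by
    intro u hu
    simp only [hSdef, add_zero]
    refine (hb3 u hu).trans ?_
    gcongr
    rw [hC]; linarith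
  have hdist : ∀ v : ℝ × ℝ, dot2 v (nor γ t) ^ 2 + dot2 v (tang γ t) ^ 2 = dot2 v v := by
    intro v
    calc _ = dot2 v v * dot2 (deriv γ t) (deriv γ t) := by simp only [dot2, nor, tang]; ring
      _ = _ := by rw [harct, mul_one]
  have hne : ∀ u, |u| ≤ ℓ → u ≠ 0 → 0 < P u ^ 2 + Q u ^ 2 := by
    intro u hu hu0
    have h1 := inj_per L hL γ hper hinj t u hu hu0
    simp only [hPdef, hQdef, neg_sq, hdist]
    by_contra hcon
    apply h1
    simp only [dot2, Prod.fst_sub, Prod.snd_sub] at hcon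
    ext
    · nlinarith [mul_self_nonneg ((γ t).1 - (γ (t + u)).1), mul_self_nonneg ((γ t).2 - (γ (t + u)).2)]
    · nlinarith [mul_self_nonneg ((γ t).1 - (γ (t + u)).1), mul_self_nonneg ((γ t).2 - (γ (t + u)).2)]
  obtain ⟨h₀, hh₀, c, hc, hlow⟩ := lower_bd ℓ C hℓ P Q hcP hcQ hPC hQC hne
  obtain ⟨M, hM⟩ := diff_bd ℓ C P Q S hcS hPC hQC hSC ν (curv γ t) h₀ c hC0 hc hlow
  obtain ⟨T1, T2⟩ := core_tendsto ℓ C hℓ P Q S hcP hcQ hcS ν (curv γ t) h₀ M hh₀ hne hM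
  have hnn : dot2 (nor γ t) (nor γ t) = 1 := by
    rw [← harct]; simp only [dot2, nor]; ring
  have hnt : dot2 (nor γ t) (tang γ t) = 0 := by
    simp only [dot2, nor, tang]; ring
  have hKh : ∀ h u, K22free γ ν t (γ t + h • nor γ t) (γ (t + u))
      = KK ν (curv γ t) (h + P u) (Q u) := by
    intro h u
    rw [K_eq γ ν t harct]
    have e1 : dot2 (γ t + h • nor γ t - γ (t + u)) (nor γ t) = h + P u := by
      calc _ = h * dot2 (nor γ t) (nor γ t) + P u := by
            simp only [hPdef, dot2, Prod.fst_sub, Prod.snd_sub, Prod.fst_add, Prod.snd_add,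
              Prod.smul_fst, Prod.smul_snd, smul_eq_mul]; ring
        _ = _ := by rw [hnn, mul_one]
    have e2 : - dot2 (γ t + h • nor γ t - γ (t + u)) (tang γ t) = Q u := by
      calc _ = - (h * dot2 (nor γ t) (tang γ t)) + Q u := by
            simp only [hQdef, dot2, Prod.fst_sub, Prod.snd_sub, Prod.fst_add, Prod.snd_add,
              Prod.smul_fst, Prod.smul_snd, smul_eq_mul]; ring
        _ = _ := by rw [hnt]; ring
    rw [e1, e2]
  have hK0 : ∀ u, K22free γ ν t (γ t) (γ (t + u)) = KK ν (curv γ t) (P u) (Q u) := by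
    intro u
    have := hKh 0 u
    simpa using this
  have hred : ∀ s, ∃ u, |u| ≤ ℓ ∧ γ s = γ (t + u) ∧ σ s = σ (t + u) := by
    intro s
    obtain ⟨y, hy, hy'⟩ := hp.exists_mem_Ico hL s (t - ℓ)
    simp only [Prod.mk.injEq] at hy'
    refine ⟨y - t, abs_le.2 ⟨by linarith [hy.1], by linarith [hy.2]⟩, ?_, ?_⟩
    · rw [add_sub_cancel]; exact hy'.1
    · rw [add_sub_cancel]; exact hy'.2
  have hint : ∀ x : ℝ × ℝ, ∫ s in (0 : ℝ)..L, K22free γ ν t x (γ s) * σ s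
      = ∫ u in (-ℓ)..ℓ, K22free γ ν t x (γ (t + u)) * σ (t + u) := by
    intro x
    have hpp : Function.Periodic (fun s => K22free γ ν t x (γ s) * σ s) L := fun s => by
      simp only [hper s, hσper s]
    have e1 := hpp.intervalIntegral_add_eq 0 (t - ℓ)
    rw [intervalIntegral.integral_comp_add_left (fun s => K22free γ ν t x (γ s) * σ s) t]
    rw [zero_add] at e1
    rw [e1]
    congr 1
    rw [hℓd]; ring
  have hS0 : S 0 = σ t := by simp [hSdef]
  refine ⟨h₀, hh₀, ?_, ?_, ?_, ?_⟩
  · intro h hpos hlt s heq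
    obtain ⟨u, hu, hs, -⟩ := hred s
    have h1 := hlow h u hlt hu
    have hh : h ≠ 0 := abs_pos.1 hpos
    have h2 : 0 < (h + P u) ^ 2 + Q u ^ 2 := lt_of_lt_of_le (by positivity) h1
    have h3 : γ t - γ (t + u) = (-h) • nor γ t := by
      rw [← hs, ← heq]; simp
    have e1 : P u = -h := by
      simp only [hPdef]; rw [h3]
      calc _ = -h * dot2 (nor γ t) (nor γ t) := by simp [dot2]; ring
        _ = _ := by rw [hnn, mul_one]
    have e2 : Q u = 0 := by
      simp only [hQdef]; rw [h3]
      calc _ = h * dot2 (nor γ t) (tang γ t) := by simp [dot2]; ring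
        _ = _ := by rw [hnt, mul_zero]
    rw [e1, e2] at h2
    simp at h2
  · refine ⟨max M |K22free γ ν t (γ t) (γ t) * σ t|, fun s _ => ?_⟩
    obtain ⟨u, hu, hs, hs'⟩ := hred s
    rw [hs, hs']
    by_cases hu0 : u = 0
    · subst hu0; rw [add_zero]; exact le_max_right _ _
    · refine le_trans ?_ (le_max_left _ _)
      have := hM 0 u (by simpa using hh₀) hu hu0
      have hF0 : FF ν 0 u = 0 := by simp [FF]
      rw [hF0, zero_mul, sub_zero, zero_add] at this
      rw [hK0]
      exact this
  · simp only [hint, hKh, hK0]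
    rw [← hS0]
    exact T1
  · simp only [hint, hKh, hK0]
    rw [← hS0]
    exact T2
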